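/- Let G be a connected simple graph of order n ≥ 2 with edge connectivity k (1 ≤ k ≤ n − 1). Then Z(G) ≤ Z(K^k_{n-1,1}), with equality if and only if G is isomorphic to K^k_{n-1,1}. -/

import Mathlib

/-- `matchCount G t` is the number of `t`-matchings of `G`, i.e. the number of
`t`-element sets of pairwise disjoint edges of `G`. -/
noncomputable def matchCount {V : Type*} (G : SimpleGraph V) (t : ℕ) : ℕ :=
  Nat.card {s : Finset (Sym2 V) // ↑s ⊆ G.edgeSet ∧ s.card = t ∧
    (s : Set (Sym2 V)).Pairwise fun e f => ∀ v, ¬(v ∈ e ∧ v ∈ f)}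

/-- The edge connectivity of a graph: the minimum number of edges whose
deletion disconnects the graph. -/
noncomputable def edgeConn {V : Type*} (G : SimpleGraph V) : ℕ :=
  sInf {j | ∃ F : Set (Sym2 V), F ⊆ G.edgeSet ∧ F.ncard = j ∧ ¬(G.deleteEdges F).Connected}

/-- The edge cut `∂(S)`: the set of edges of `G` with exactly one endpoint in `S`. -/
def edgeCut {V : Type*} (G : SimpleGraph V) (S : Set V) : Set (Sym2 V) :=
  {e | e ∈ G.edgeSet ∧ ∃ u ∈ S, ∃ v, v ∉ S ∧ e = s(u, v)}

/-- `Kstar n k` is the graph `K^k_{n-1,1}`: obtained from `K_1 ∪ K_{n-1}` by adding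
`k` edges joining the vertex of `K_1` (vertex `n-1`) to `k` distinct vertices of `K_{n-1}`. -/
def Kstar (n k : ℕ) : SimpleGraph (Fin n) :=
  SimpleGraph.fromRel (fun u v =>
    (u.val < n - 1 ∧ v.val < n - 1) ∨ (u.val < k ∧ v.val = n - 1))

/-- `Kmk n m k` is the graph `K^k_{n-m,m}`: obtained from `K_{n-m} ∪ K_m` by adding
`k` independent edges between the two parts. -/
def Kmk (n m k : ℕ) : SimpleGraph (Fin n) :=
  SimpleGraph.fromRel (fun u v =>
    (u.val < n - m ∧ v.val < n - m) ∨ (n - m ≤ u.val ∧ n - m ≤ v.val) ∨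
    (u.val < k ∧ v.val = n - m + u.val))

/-- The Hosoya index: the total number of matchings of `G`. -/
noncomputable def hosoya {V : Type*} [Fintype V] (G : SimpleGraph V) : ℕ :=
  ∑ t ∈ Finset.range (Fintype.card V / 2 + 1), matchCount G t

/-!
A matching either misses the vertex `v` or uses exactly one edge at `v`. Comparing what remains with
complete graphs gives `Z(G) ≤ I(n - 1) + deg v * I(n - 2)`, where `I(m) = Z(K_m)` is the telephone
number, with equality iff all vertices other than `v` are pairwise adjacent. If some vertex has
degree equal to the edge connectivity `k`, this is the theorem.

Otherwise every degree exceeds `k`. Take a minimum edge cut `∂S`. A matching either avoids `∂S` or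
contains one of its `k` edges, so `Z(G) ≤ Z(G - ∂S) + ∑ Z(G - V(e))` over `e ∈ ∂S`. The first term
is at most `I(|S|) * I(n - |S|) ≤ I(n - 1)`. If every vertex of `S` had a neighbour outside `S`, the
neighbours of any `u ∈ S` could be mapped injectively to cut edges, whence `deg u ≤ k`. So some
vertex of `S`, and likewise of its complement, is not met by the cut. Two such vertices are
non-adjacent and survive in every `G - V(e)`, which therefore is not complete, and
`Z(G - V(e)) < I(n - 2)`.
-/

open Finset

section Telephone

/-- The telephone numbers: `telephone m` is the Hosoya index of the complete graph `K_m`. -/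
def telephone : ℕ → ℕ
  | 0 => 1
  | 1 => 1
  | m + 2 => telephone (m + 1) + (m + 1) * telephone m

theorem telephone_le_succ : ∀ m, telephone m ≤ telephone (m + 1)
  | 0 => le_rfl
  | _ + 1 => Nat.le_add_right _ _

theorem telephone_succ_le_mul : ∀ m, telephone (m + 1) ≤ (m + 1) * telephone m
  | 0 => le_rfl
  | m + 1 => calc
      telephone (m + 1) + (m + 1) * telephone m
        ≤ telephone (m + 1) + (m + 1) * telephone (m + 1) := by
          gcongr
          exact telephone_le_succ m
      _ = (m + 1 + 1) * telephone (m + 1) := by ring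

theorem telephone_succ_mul_telephone_succ_le (a b : ℕ) :
    telephone (a + 1) * telephone (b + 1) ≤ telephone (a + b + 1) := by
  induction b using Nat.twoStepInduction with
  | zero => simp [telephone]
  | one => calc
      telephone (a + 1) * telephone 2 = telephone (a + 1) + telephone (a + 1) := mul_two _
      _ ≤ telephone (a + 1) + (a + 1) * telephone a := by
          gcongr
          exact telephone_succ_le_mul a
  | more b ih₀ ih₁ => calc
      telephone (a + 1) * telephone (b + 3)
        = telephone (a + 1) * telephone (b + 2) +
            (b + 2) * (telephone (a + 1) * telephone (b + 1)) := by
          simp only [telephone]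
          ring
      _ ≤ telephone (a + b + 2) + (a + b + 2) * telephone (a + b + 1) := by
          gcongr
          · exact ih₁
          · omega

end Telephone

section CompleteOn

variable {V : Type*} {G : SimpleGraph V} {A B : Set V} {e f : Sym2 V}

/-- The complete graph on the vertex set `A`, regarded as a graph on all of `V` whose other vertices
are isolated. Intersecting with it encodes deletion of the vertices outside `A` without changing the
vertex type: `G ⊓ completeOn A` stands for the induced subgraph `G[A]`. -/
def completeOn (A : Set V) : SimpleGraph V where
  Adj a b := a ≠ b ∧ a ∈ A ∧ b ∈ A

/-- Two edges are vertex-disjoint if they have no common endpoint; distinct edges of a matching are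
required to be so. -/
def VertexDisjoint (e f : Sym2 V) : Prop := ∀ v, ¬(v ∈ e ∧ v ∈ f)

theorem VertexDisjoint.symm (h : VertexDisjoint e f) : VertexDisjoint f e :=
  fun v hv => h v hv.symm

theorem completeOn_adj {a b : V} : (completeOn A).Adj a b ↔ a ≠ b ∧ a ∈ A ∧ b ∈ A := Iff.rfl

theorem mem_edgeSet_completeOn : e ∈ (completeOn A).edgeSet ↔ ¬e.IsDiag ∧ (e : Set V) ⊆ A := by
  induction e with
  | _ a b => simp [completeOn_adj, Set.subset_def]

theorem completeOn_of_subsingleton (hA : A.Subsingleton) : completeOn A = ⊥ := by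
  ext a b
  simpa [completeOn_adj] using fun hab ha hb => hab (hA ha hb)

theorem completeOn_mono (h : A ⊆ B) : completeOn A ≤ completeOn B :=
  fun _ _ hab => ⟨hab.1, h hab.2.1, h hab.2.2⟩

theorem completeOn_inf_completeOn : completeOn A ⊓ completeOn B = completeOn (A ∩ B) := by
  ext a b
  simp only [SimpleGraph.inf_adj, completeOn_adj, Set.mem_inter_iff]
  tauto

theorem completeOn_le_iff_isClique : completeOn A ≤ G ↔ G.IsClique A :=
  ⟨fun h _ ha _ hb hab => h ⟨hab, ha, hb⟩, fun h _ _ hab => h hab.2.1 hab.2.2 hab.1⟩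

theorem deleteIncidenceSet_eq_inf_completeOn (v : V) :
    G.deleteIncidenceSet v = G ⊓ completeOn {v}ᶜ := by
  ext a b
  simp only [SimpleGraph.deleteIncidenceSet_adj, SimpleGraph.inf_adj, completeOn_adj,
    Set.mem_compl_iff, Set.mem_singleton_iff]
  exact and_congr_right fun hab => ⟨fun h => ⟨hab.ne, h⟩, And.right⟩

theorem mem_edgeSet_inf_completeOn_compl :
    f ∈ (G ⊓ completeOn (e : Set V)ᶜ).edgeSet ↔ f ∈ G.edgeSet ∧ VertexDisjoint e f := by
  rw [SimpleGraph.edgeSet_inf, Set.mem_inter_iff, mem_edgeSet_completeOn]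
  refine and_congr_right fun hf => ?_
  simp only [G.not_isDiag_of_mem_edgeSet hf, not_false_eq_true, true_and, VertexDisjoint,
    Set.subset_def, Set.mem_compl_iff, SetLike.mem_coe, not_and]
  exact forall_congr' fun _ => imp_not_comm

theorem ncard_coe_of_not_isDiag (he : ¬e.IsDiag) : (e : Set V).ncard = 2 := by
  induction e with
  | _ a b => rw [Sym2.coe_mk, Set.ncard_pair (by simpa using he)]

end CompleteOn

section Matchings

variable {V : Type*} [Fintype V] {G : SimpleGraph V} {e : Sym2 V} {s : Finset (Sym2 V)}

open Classical in
/-- The finite set of all matchings of `G`, a matching being a set of pairwise vertex-disjoint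
edges. Its cardinality is the Hosoya index, which turns counting into injections of matchings. -/
noncomputable def matchings (G : SimpleGraph V) : Finset (Finset (Sym2 V)) :=
  {s | ↑s ⊆ G.edgeSet ∧ (s : Set (Sym2 V)).Pairwise VertexDisjoint}

theorem mem_matchings :
    s ∈ matchings G ↔ ↑s ⊆ G.edgeSet ∧ (s : Set (Sym2 V)).Pairwise VertexDisjoint := by
  simp [matchings]

theorem card_le_of_mem_matchings (hs : s ∈ matchings G) : #s ≤ Fintype.card V / 2 := by
  classical
  obtain ⟨hsG, hsd⟩ := mem_matchings.1 hs
  have hcover : #(s.biUnion Sym2.toFinset) = #s * 2 := by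
    rw [card_biUnion, sum_const_nat]
    · exact fun e he => e.card_toFinset_of_not_isDiag (G.not_isDiag_of_mem_edgeSet (hsG he))
    · refine fun e he f hf hef => Finset.disjoint_left.2 fun v hve hvf => ?_
      exact hsd he hf hef v ⟨Sym2.mem_toFinset.1 hve, Sym2.mem_toFinset.1 hvf⟩
  rw [Nat.le_div_iff_mul_le two_pos, ← hcover]
  exact card_le_univ _

theorem hosoya_eq_card_matchings (G : SimpleGraph V) : hosoya G = #(matchings G) := by
  rw [hosoya, card_eq_sum_card_fiberwise (f := card) (t := range (Fintype.card V / 2 + 1))]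
  · refine sum_congr rfl fun t _ => ?_
    rw [matchCount, Nat.subtype_card]
    intro s
    rw [mem_filter, mem_matchings, and_assoc, and_comm (a := _ = t)]
    rfl
  · intro s hs
    simpa [Nat.lt_succ_iff] using card_le_of_mem_matchings hs

theorem hosoya_bot : hosoya (⊥ : SimpleGraph V) = 1 := by
  rw [hosoya_eq_card_matchings, card_eq_one]
  refine ⟨∅, ext fun s => ?_⟩
  simp +contextual [mem_matchings]

theorem hosoya_strictMono : StrictMono (hosoya : SimpleGraph V → ℕ) := by
  intro G H hGH
  rw [hosoya_eq_card_matchings, hosoya_eq_card_matchings]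
  have hedge := SimpleGraph.edgeSet_ssubset_edgeSet.2 hGH
  obtain ⟨e, heH, heG⟩ := Set.exists_of_ssubset hedge
  refine card_lt_card ((ssubset_iff_of_subset fun s hs => ?_).2 ⟨{e}, ?_, ?_⟩)
  · rw [mem_matchings] at hs ⊢
    exact ⟨hs.1.trans hedge.subset, hs.2⟩
  · simp [mem_matchings, heH]
  · simp [mem_matchings, heG]

theorem hosoya_sup_le (G H : SimpleGraph V) : hosoya (G ⊔ H) ≤ hosoya G * hosoya H := by
  classical
  simp only [hosoya_eq_card_matchings, ← card_product]
  refine card_le_card_of_injOn (fun s => ({e ∈ s | e ∈ G.edgeSet}, {e ∈ s | e ∈ H.edgeSet})) ?_ ?_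
  · intro s hs
    have hsd := (mem_matchings.1 hs).2
    simp only [coe_product, Set.mem_prod, mem_coe, mem_matchings]
    refine ⟨⟨fun e he => (mem_filter.1 he).2, hsd.mono (filter_subset _ _)⟩,
      fun e he => (mem_filter.1 he).2, hsd.mono (filter_subset _ _)⟩
  · have hsplit : ∀ s ∈ matchings (G ⊔ H),
        {e ∈ s | e ∈ G.edgeSet} ∪ {e ∈ s | e ∈ H.edgeSet} = s := by
      intro s hs
      rw [← filter_or, filter_true_of_mem]
      intro e he
      simpa using (mem_matchings.1 hs).1 he
    intro s hs t ht hst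
    obtain ⟨hG, hH⟩ := Prod.ext_iff.1 hst
    exact (hsplit s hs).symm.trans ((congr_arg₂ _ hG hH).trans (hsplit t ht))

theorem card_filter_mem_matchings [DecidableEq V] (he : e ∈ G.edgeSet) :
    #{s ∈ matchings G | e ∈ s} = hosoya (G ⊓ completeOn (e : Set V)ᶜ) := by
  have hsub : ∀ {s}, s ∈ matchings (G ⊓ completeOn (e : Set V)ᶜ) →
      ∀ f ∈ s, f ∈ G.edgeSet ∧ VertexDisjoint e f :=
    fun hs f hf => mem_edgeSet_inf_completeOn_compl.1 ((mem_matchings.1 hs).1 hf)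
  rw [hosoya_eq_card_matchings]
  refine card_nbij' (·.erase e) (insert e) ?_ ?_ ?_ ?_
  · intro s hs
    obtain ⟨hsG, hes⟩ := mem_filter.1 hs
    obtain ⟨hsE, hsd⟩ := mem_matchings.1 hsG
    refine mem_matchings.2 ⟨fun f hf => ?_, hsd.mono (erase_subset _ _)⟩
    obtain ⟨hfe, hfs⟩ := mem_erase.1 hf
    exact mem_edgeSet_inf_completeOn_compl.2 ⟨hsE hfs, hsd hes hfs hfe.symm⟩
  · intro s hs
    refine mem_filter.2 ⟨mem_matchings.2 ⟨?_, ?_⟩, mem_insert_self e s⟩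
    · rw [coe_insert, Set.insert_subset_iff]
      exact ⟨he, fun f hf => (hsub hs f hf).1⟩
    · rw [coe_insert]
      exact (mem_matchings.1 hs).2.insert fun f hf _ =>
        ⟨(hsub hs f hf).2, (hsub hs f hf).2.symm⟩
  · exact fun s hs => insert_erase (mem_filter.1 hs).2
  · intro s hs
    refine erase_insert fun hes => ?_
    obtain ⟨v, hv⟩ : ∃ v, v ∈ e := ⟨_, e.out_fst_mem⟩
    exact (hsub hs e hes).2 v ⟨hv, hv⟩

theorem hosoya_eq_hosoya_deleteEdges_add_card [DecidableEq V] (G : SimpleGraph V)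
    (F : Finset (Sym2 V)) :
    hosoya G = hosoya (G.deleteEdges F) + #(F.biUnion fun e => {s ∈ matchings G | e ∈ s}) := by
  have havoid : matchings (G.deleteEdges F) = {s ∈ matchings G | Disjoint s F} := by
    ext s
    rw [mem_filter, mem_matchings, mem_matchings, SimpleGraph.edgeSet_deleteEdges,
      Set.subset_sdiff, disjoint_coe]
    tauto
  have hmeet : (F.biUnion fun e => {s ∈ matchings G | e ∈ s}) =
      {s ∈ matchings G | ¬Disjoint s F} := by
    ext s
    simp only [mem_biUnion, mem_filter, not_disjoint_iff]
    tauto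
  rw [hosoya_eq_card_matchings, hosoya_eq_card_matchings, havoid, hmeet,
    card_filter_add_card_filter_not]

theorem hosoya_le_hosoya_deleteEdges_add_sum {F : Finset (Sym2 V)} (hF : ↑F ⊆ G.edgeSet) :
    hosoya G ≤ hosoya (G.deleteEdges F) + ∑ e ∈ F, hosoya (G ⊓ completeOn (e : Set V)ᶜ) := by
  classical
  rw [hosoya_eq_hosoya_deleteEdges_add_card G F,
    ← sum_congr rfl fun e he => card_filter_mem_matchings (hF he)]
  gcongr
  exact card_biUnion_le

theorem hosoya_eq_hosoya_deleteIncidenceSet_add_sum [DecidableEq V] (v : V)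
    [Fintype (G.neighborSet v)] :
    hosoya G = hosoya (G.deleteIncidenceSet v) +
      ∑ e ∈ G.incidenceFinset v, hosoya (G ⊓ completeOn (e : Set V)ᶜ) := by
  have hE : ∀ e ∈ G.incidenceFinset v, e ∈ G.edgeSet ∧ v ∈ e :=
    fun e he => (G.mem_incidenceFinset v e).1 he
  rw [hosoya_eq_hosoya_deleteEdges_add_card G (G.incidenceFinset v), G.coe_incidenceFinset,
    SimpleGraph.deleteIncidenceSet, SimpleGraph.deleteEdges, card_biUnion,
    sum_congr rfl fun e he => card_filter_mem_matchings (hE e he).1]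
  refine fun e he f hf hef => Finset.disjoint_left.2 fun s hes hfs => ?_
  obtain ⟨hs, hes⟩ := mem_filter.1 hes
  exact (mem_matchings.1 hs).2 hes (mem_filter.1 hfs).2 hef v ⟨(hE e he).2, (hE f hf).2⟩

end Matchings

section CompleteBounds

variable {V : Type*} [Fintype V] {G : SimpleGraph V}

theorem hosoya_completeOn (A : Set V) : hosoya (completeOn A) = telephone A.ncard := by
  classical
  have hsmall : ∀ A : Set V, A.ncard ≤ 1 → hosoya (completeOn A) = 1 := fun A hA => by
    rw [completeOn_of_subsingleton (Set.ncard_le_one_iff_subsingleton.1 hA), hosoya_bot]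
  induction hm : A.ncard using Nat.twoStepInduction generalizing A with
  | zero => exact hsmall A (hm.trans_le zero_le_one)
  | one => exact hsmall A hm.le
  | more m ih₀ ih₁ =>
    obtain ⟨v, hv⟩ : A.Nonempty := Set.nonempty_of_ncard_ne_zero (by omega)
    have hdelete : (completeOn A).deleteIncidenceSet v = completeOn (A \ {v}) := by
      rw [deleteIncidenceSet_eq_inf_completeOn, completeOn_inf_completeOn, Set.sdiff_eq]
    have hcard : (A \ {v}).ncard = m + 1 := by
      rw [Set.ncard_sdiff_singleton_of_mem hv, hm]
      rfl
    have hdegree : (completeOn A).degree v = m + 1 := by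
      rw [← SimpleGraph.card_neighborFinset_eq_degree, ← hcard, ← Set.ncard_coe_finset]
      congr 1
      ext w
      simp [completeOn_adj, hv, and_comm, eq_comm]
    have hedge : ∀ e ∈ (completeOn A).incidenceFinset v,
        hosoya (completeOn A ⊓ completeOn (e : Set V)ᶜ) = telephone m := by
      intro e he
      obtain ⟨hdiag, heA⟩ := mem_edgeSet_completeOn.1
        (((completeOn A).mem_incidenceFinset v e).1 he).1
      rw [completeOn_inf_completeOn, ← Set.sdiff_eq]
      apply ih₀
      rw [Set.ncard_sdiff heA, ncard_coe_of_not_isDiag hdiag, hm, Nat.add_sub_cancel]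
    rw [hosoya_eq_hosoya_deleteIncidenceSet_add_sum v, hdelete, ih₁ _ hcard, sum_congr rfl hedge,
      sum_const, SimpleGraph.card_incidenceFinset_eq_degree, hdegree, smul_eq_mul, telephone]

theorem hosoya_completeOn_compl_singleton (v : V) :
    hosoya (completeOn {v}ᶜ) = telephone (Fintype.card V - 1) := by
  rw [hosoya_completeOn, Set.ncard_compl, Set.ncard_singleton, Nat.card_eq_fintype_card]

theorem hosoya_completeOn_compl_edge {e : Sym2 V} (he : e ∈ G.edgeSet) :
    hosoya (completeOn (e : Set V)ᶜ) = telephone (Fintype.card V - 2) := by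
  rw [hosoya_completeOn, Set.ncard_compl,
    ncard_coe_of_not_isDiag (G.not_isDiag_of_mem_edgeSet he), Nat.card_eq_fintype_card]

theorem hosoya_inf_completeOn_compl_edge_le {e : Sym2 V} (he : e ∈ G.edgeSet) :
    hosoya (G ⊓ completeOn (e : Set V)ᶜ) ≤ telephone (Fintype.card V - 2) :=
  (hosoya_strictMono.monotone inf_le_right).trans_eq (hosoya_completeOn_compl_edge he)

theorem sum_incidenceFinset_hosoya_le [DecidableEq V] (v : V) [Fintype (G.neighborSet v)] :
    ∑ e ∈ G.incidenceFinset v, hosoya (G ⊓ completeOn (e : Set V)ᶜ) ≤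
      G.degree v * telephone (Fintype.card V - 2) := by
  rw [← G.card_incidenceFinset_eq_degree, ← smul_eq_mul]
  exact sum_le_card_nsmul _ _ _ fun e he =>
    hosoya_inf_completeOn_compl_edge_le ((G.mem_incidenceFinset v e).1 he).1

theorem hosoya_le_telephone_add_degree_mul (v : V) [Fintype (G.neighborSet v)] :
    hosoya G ≤
      telephone (Fintype.card V - 1) + G.degree v * telephone (Fintype.card V - 2) := by
  classical
  rw [hosoya_eq_hosoya_deleteIncidenceSet_add_sum v, deleteIncidenceSet_eq_inf_completeOn,
    ← hosoya_completeOn_compl_singleton v]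
  exact add_le_add (hosoya_strictMono.monotone inf_le_right) (sum_incidenceFinset_hosoya_le v)

theorem hosoya_eq_telephone_add_degree_mul_iff (v : V) [Fintype (G.neighborSet v)] :
    hosoya G =
        telephone (Fintype.card V - 1) + G.degree v * telephone (Fintype.card V - 2) ↔
      G.IsClique {v}ᶜ := by
  classical
  rw [hosoya_eq_hosoya_deleteIncidenceSet_add_sum v, deleteIncidenceSet_eq_inf_completeOn,
    ← hosoya_completeOn_compl_singleton v, ← completeOn_le_iff_isClique]
  constructor
  · intro h
    by_contra hv
    have hlt := hosoya_strictMono (inf_lt_right.2 hv)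
    have := sum_incidenceFinset_hosoya_le (G := G) v
    omega
  · intro hv
    have hedge : ∀ e ∈ G.incidenceFinset v,
        hosoya (G ⊓ completeOn (e : Set V)ᶜ) = telephone (Fintype.card V - 2) := by
      intro e he
      obtain ⟨heG, hve⟩ := (G.mem_incidenceFinset v e).1 he
      have hsub : (e : Set V)ᶜ ⊆ {v}ᶜ :=
        Set.compl_subset_compl.2 (Set.singleton_subset_iff.2 hve)
      rw [inf_eq_right.2 ((completeOn_mono hsub).trans hv), hosoya_completeOn_compl_edge heG]
    rw [inf_eq_right.2 hv, sum_congr rfl hedge, sum_const,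
      SimpleGraph.card_incidenceFinset_eq_degree, smul_eq_mul]

end CompleteBounds

section EdgeCut

variable {V : Type*} {G : SimpleGraph V} {S : Set V} {a b u : V}

theorem mem_edgeCut : s(a, b) ∈ edgeCut G S ↔ G.Adj a b ∧ (a ∈ S ∧ b ∉ S ∨ b ∈ S ∧ a ∉ S) := by
  simp only [edgeCut, Set.mem_ofPred_eq, SimpleGraph.mem_edgeSet, Sym2.eq_iff]
  grind

theorem edgeCut_subset_edgeSet (G : SimpleGraph V) (S : Set V) : edgeCut G S ⊆ G.edgeSet :=
  fun _ he => he.1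

theorem edgeCut_compl (G : SimpleGraph V) (S : Set V) : edgeCut G Sᶜ = edgeCut G S := by
  ext e
  induction e with
  | _ a b =>
    simp only [mem_edgeCut, Set.mem_compl_iff, not_not]
    tauto

theorem edgeCut_singleton (G : SimpleGraph V) (v : V) : edgeCut G {v} = G.incidenceSet v := by
  ext e
  induction e with
  | _ a b =>
    simp only [mem_edgeCut, Set.mem_singleton_iff, SimpleGraph.incidenceSet, Set.mem_ofPred_eq,
      SimpleGraph.mem_edgeSet, Sym2.mem_iff]
    have : G.Adj a b → a ≠ b := SimpleGraph.Adj.ne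
    grind

theorem deleteEdges_edgeCut_le (G : SimpleGraph V) (S : Set V) :
    G.deleteEdges (edgeCut G S) ≤ completeOn S ⊔ completeOn Sᶜ := by
  intro a b hab
  simp only [SimpleGraph.deleteEdges_adj, mem_edgeCut, SimpleGraph.sup_adj, completeOn_adj,
    Set.mem_compl_iff] at hab ⊢
  have := hab.1.ne
  tauto

theorem edgeConn_le_ncard_edgeCut (ha : a ∈ S) (hb : b ∉ S) :
    edgeConn G ≤ (edgeCut G S).ncard := by
  refine Nat.sInf_le ⟨edgeCut G S, edgeCut_subset_edgeSet G S, rfl, fun hconn => ?_⟩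
  obtain ⟨p⟩ := hconn.preconnected a b
  obtain ⟨d, -, hfst, hsnd⟩ := p.exists_boundary_dart S ha hb
  obtain ⟨hadj, hnotMem⟩ := SimpleGraph.deleteEdges_adj.1 d.adj
  exact hnotMem (mem_edgeCut.2 ⟨hadj, .inl ⟨hfst, hsnd⟩⟩)

theorem ncard_incidenceSet (v : V) [Fintype (G.neighborSet v)] :
    (G.incidenceSet v).ncard = G.degree v := by
  classical
  rw [← G.coe_incidenceFinset, Set.ncard_coe_finset, G.card_incidenceFinset_eq_degree]

theorem edgeConn_le_degree [Nontrivial V] (v : V) [Fintype (G.neighborSet v)] :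
    edgeConn G ≤ G.degree v := by
  obtain ⟨w, hw⟩ := exists_ne v
  rw [← ncard_incidenceSet, ← edgeCut_singleton]
  exact edgeConn_le_ncard_edgeCut rfl hw

theorem exists_ncard_edgeCut_eq_edgeConn [Finite V] [Nonempty V] (h : 0 < edgeConn G) :
    ∃ S : Set V, S.Nonempty ∧ Sᶜ.Nonempty ∧ (edgeCut G S).ncard = edgeConn G := by
  obtain ⟨F, -, hFcard, hFdisc⟩ := Nat.sInf_mem (Nat.nonempty_of_pos_sInf h)
  obtain ⟨a, b, hab⟩ : ∃ a b, ¬(G.deleteEdges F).Reachable a b := by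
    simpa [SimpleGraph.connected_iff, SimpleGraph.Preconnected] using hFdisc
  let S : Set V := {w | (G.deleteEdges F).Reachable a w}
  have haS : a ∈ S := SimpleGraph.Reachable.refl a
  refine ⟨S, ⟨a, haS⟩, ⟨b, hab⟩, le_antisymm ?_ (edgeConn_le_ncard_edgeCut haS hab)⟩
  refine (Set.ncard_le_ncard ?_).trans_eq hFcard
  rintro _ ⟨huw, u, hu, w, hw, rfl⟩
  by_contra huwF
  have hadj : (G.deleteEdges F).Adj u w := SimpleGraph.deleteEdges_adj.2 ⟨huw, huwF⟩
  exact hw (SimpleGraph.Reachable.trans hu hadj.reachable)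

-- A neighbour `w` of `u` gives the cut edge `uw` if `w ∉ S`, and some cut edge at `w` otherwise.
theorem degree_le_ncard_edgeCut [Finite V] (hS : ∀ x ∈ S, ∃ y, y ∉ S ∧ G.Adj x y) (hu : u ∈ S)
    [Fintype (G.neighborSet u)] : G.degree u ≤ (edgeCut G S).ncard := by
  classical
  choose! out hout hadj using hS
  rw [← SimpleGraph.card_neighborFinset_eq_degree, ← Set.ncard_coe_finset, G.coe_neighborFinset]
  refine Set.ncard_le_ncard_of_injOn (fun w => if w ∈ S then s(w, out w) else s(u, w)) ?_ ?_
  · intro w huw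
    split_ifs with hw
    · exact mem_edgeCut.2 ⟨hadj w hw, .inl ⟨hw, hout w hw⟩⟩
    · exact mem_edgeCut.2 ⟨huw, .inl ⟨hu, hw⟩⟩
  · intro w huw w' huw' heq
    have := SimpleGraph.Adj.ne huw
    have := SimpleGraph.Adj.ne huw'
    have := hout w
    have := hout w'
    dsimp only at heq
    split_ifs at heq <;> rw [Sym2.eq_iff] at heq <;> grind

theorem exists_mem_forall_not_adj_of_degree_ne [Fintype V] [DecidableRel G.Adj] (hS : S.Nonempty)
    (hSc : Sᶜ.Nonempty) (hcut : (edgeCut G S).ncard = edgeConn G)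
    (hdeg : ∀ v, G.degree v ≠ edgeConn G) : ∃ x ∈ S, ∀ y ∉ S, ¬G.Adj x y := by
  by_contra! h
  obtain ⟨u, hu⟩ := hS
  obtain ⟨w, hw⟩ := hSc
  have : Nontrivial V := ⟨u, w, fun huw => hw (huw ▸ hu)⟩
  exact hdeg u (((degree_le_ncard_edgeCut h hu).trans_eq hcut).antisymm (edgeConn_le_degree u))

end EdgeCut

section Bound

variable {V : Type*} [Fintype V] {G : SimpleGraph V} {S : Set V}

theorem hosoya_deleteEdges_edgeCut_le (hS : S.Nonempty) (hSc : Sᶜ.Nonempty) :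
    hosoya (G.deleteEdges (edgeCut G S)) ≤ telephone (Fintype.card V - 1) := by
  obtain ⟨p, hp⟩ : ∃ p, S.ncard = p + 1 := Nat.exists_eq_add_of_le' hS.ncard_pos
  obtain ⟨q, hq⟩ : ∃ q, Sᶜ.ncard = q + 1 := Nat.exists_eq_add_of_le' hSc.ncard_pos
  have hpq : p + q + 1 = Fintype.card V - 1 := by
    have := Set.ncard_add_ncard_compl S
    rw [Nat.card_eq_fintype_card] at this
    omega
  calc hosoya (G.deleteEdges (edgeCut G S))
      ≤ hosoya (completeOn S ⊔ completeOn Sᶜ) :=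
        hosoya_strictMono.monotone (deleteEdges_edgeCut_le G S)
    _ ≤ telephone (p + 1) * telephone (q + 1) := by
        rw [← hp, ← hq, ← hosoya_completeOn, ← hosoya_completeOn]
        exact hosoya_sup_le _ _
    _ ≤ telephone (Fintype.card V - 1) := hpq ▸ telephone_succ_mul_telephone_succ_le p q

theorem hosoya_inf_completeOn_compl_edge_lt {x y : V} (hx : x ∈ S) (hxS : ∀ w ∉ S, ¬G.Adj x w)
    (hy : y ∉ S) (hyS : ∀ w ∈ S, ¬G.Adj y w) {e : Sym2 V} (he : e ∈ edgeCut G S) :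
    hosoya (G ⊓ completeOn (e : Set V)ᶜ) < telephone (Fintype.card V - 2) := by
  obtain ⟨heG, u, hu, w, hw, rfl⟩ := he
  rw [← hosoya_completeOn_compl_edge heG]
  refine hosoya_strictMono (inf_lt_right.2 fun hle => hxS y hy (hle ?_))
  have hxu : x ≠ u := fun h => hxS w hw (h ▸ heG)
  have hyw : y ≠ w := fun h => hyS u hu (h ▸ heG.symm)
  simp only [completeOn_adj, Set.mem_compl_iff, SetLike.mem_coe, Sym2.mem_iff]
  grind

theorem hosoya_lt_of_degree_ne [Nonempty V] [DecidableRel G.Adj] (h : 0 < edgeConn G)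
    (hdeg : ∀ v, G.degree v ≠ edgeConn G) :
    hosoya G <
      telephone (Fintype.card V - 1) + edgeConn G * telephone (Fintype.card V - 2) := by
  classical
  obtain ⟨S, hS, hSc, hcut⟩ := exists_ncard_edgeCut_eq_edgeConn h
  obtain ⟨x, hx, hxS⟩ := exists_mem_forall_not_adj_of_degree_ne hS hSc hcut hdeg
  obtain ⟨y, hy, hyS⟩ := exists_mem_forall_not_adj_of_degree_ne hSc (by rwa [compl_compl])
    (by rwa [edgeCut_compl]) hdeg
  simp only [Set.mem_compl_iff, not_not] at hy hyS
  have hsum : ∑ e ∈ (edgeCut G S).toFinset, hosoya (G ⊓ completeOn (e : Set V)ᶜ) <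
      edgeConn G * telephone (Fintype.card V - 2) := by
    rw [← hcut, Set.ncard_eq_toFinset_card', ← smul_eq_mul, ← sum_const]
    refine sum_lt_sum_of_nonempty ?_ fun e he =>
      hosoya_inf_completeOn_compl_edge_lt hx hxS hy hyS (Set.mem_toFinset.1 he)
    rwa [← card_pos, ← Set.ncard_eq_toFinset_card', hcut]
  have hle := hosoya_le_hosoya_deleteEdges_add_sum (F := (edgeCut G S).toFinset)
    (by rw [Set.coe_toFinset]; exact edgeCut_subset_edgeSet G S)
  rw [Set.coe_toFinset] at hle
  exact hle.trans_lt (add_lt_add_of_le_of_lt (hosoya_deleteEdges_edgeCut_le hS hSc) hsum)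

theorem hosoya_le_telephone_add_edgeConn_mul [Nonempty V] (h : 0 < edgeConn G) :
    hosoya G ≤
      telephone (Fintype.card V - 1) + edgeConn G * telephone (Fintype.card V - 2) := by
  classical
  by_cases hdeg : ∃ v, G.degree v = edgeConn G
  · obtain ⟨v, hv⟩ := hdeg
    exact hv ▸ hosoya_le_telephone_add_degree_mul v
  · exact (hosoya_lt_of_degree_ne h (not_exists.1 hdeg)).le

theorem hosoya_eq_telephone_add_edgeConn_mul_iff [Nonempty V] [DecidableRel G.Adj]
    (h : 0 < edgeConn G) :
    hosoya G =
        telephone (Fintype.card V - 1) + edgeConn G * telephone (Fintype.card V - 2) ↔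
      ∃ v, G.degree v = edgeConn G ∧ G.IsClique {v}ᶜ := by
  constructor
  · intro hG
    obtain ⟨v, hv⟩ : ∃ v, G.degree v = edgeConn G := by
      by_contra! hdeg
      exact (hosoya_lt_of_degree_ne h hdeg).ne hG
    exact ⟨v, hv, (hosoya_eq_telephone_add_degree_mul_iff v).1 (hv.symm ▸ hG)⟩
  · rintro ⟨v, hv, hclique⟩
    rw [← hv, (hosoya_eq_telephone_add_degree_mul_iff v).2 hclique]

end Bound

section Extremal

variable {V W : Type*}

theorem adj_iff_of_isClique_compl_singleton {G : SimpleGraph V} {v a b : V}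
    (hG : G.IsClique {v}ᶜ) : G.Adj a b ↔ a ≠ b ∧ (a = v → G.Adj v b) ∧ (b = v → G.Adj v a) := by
  refine ⟨fun h => ⟨h.ne, fun ha => ha ▸ h, fun hb => hb ▸ h.symm⟩, fun ⟨hab, ha, hb⟩ => ?_⟩
  by_cases hav : a = v
  · exact hav ▸ ha hav
  by_cases hbv : b = v
  · exact hbv ▸ (hb hbv).symm
  · exact hG hav hbv hab

variable [Fintype V] [Fintype W]

theorem exists_equiv_map_eq_forall_iff {p : V → Prop} {q : W → Prop} [DecidablePred p]
    [DecidablePred q] {v : V} {w : W} (hv : ¬p v) (hw : ¬q w)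
    (hcard : Fintype.card V = Fintype.card W)
    (hpq : Fintype.card {a // p a} = Fintype.card {b // q b}) :
    ∃ e : V ≃ W, e v = w ∧ ∀ a, q (e a) ↔ p a := by
  classical
  have hcompl : Fintype.card {a // ¬p a} = Fintype.card {b // ¬q b} := by
    rw [Fintype.card_subtype_compl, Fintype.card_subtype_compl, hcard, hpq]
  let e : V ≃ W := (Equiv.sumCompl p).symm.trans
    ((Equiv.sumCongr (Fintype.equivOfCardEq hpq) (Fintype.equivOfCardEq hcompl)).trans
      (Equiv.sumCompl q))
  have he : ∀ a, q (e a) ↔ p a := by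
    intro a
    by_cases ha : p a
    · simpa [e, ha] using (Fintype.equivOfCardEq hpq ⟨a, ha⟩).2
    · simpa [e, ha] using (Fintype.equivOfCardEq hcompl ⟨a, ha⟩).2
  refine ⟨e.trans (Equiv.swap (e v) w), by simp, fun a => ?_⟩
  have : ¬q (e v) := mt (he v).1 hv
  rw [← he, Equiv.trans_apply, Equiv.swap_apply_def]
  split_ifs <;> simp_all

theorem nonempty_iso_of_isClique_compl_singleton {G : SimpleGraph V} {H : SimpleGraph W}
    [DecidableRel G.Adj] [DecidableRel H.Adj] {v : V} {w : W} (hG : G.IsClique {v}ᶜ)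
    (hH : H.IsClique {w}ᶜ) (hcard : Fintype.card V = Fintype.card W)
    (hdeg : G.degree v = H.degree w) : Nonempty (G ≃g H) := by
  have hneighbor : Fintype.card {a // G.Adj v a} = Fintype.card {b // H.Adj w b} := by
    rwa [Fintype.card_subtype, Fintype.card_subtype, ← SimpleGraph.neighborFinset_eq_filter,
      ← SimpleGraph.neighborFinset_eq_filter]
  obtain ⟨e, hev, he⟩ := exists_equiv_map_eq_forall_iff G.irrefl H.irrefl hcard hneighbor
  refine ⟨⟨e, fun {a b} => ?_⟩⟩
  rw [adj_iff_of_isClique_compl_singleton hG, adj_iff_of_isClique_compl_singleton hH, he, he,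
    ← hev, e.injective.ne_iff, e.apply_eq_iff_eq, e.apply_eq_iff_eq]

end Extremal

section Kstar

variable {V : Type*} [Fintype V] {G : SimpleGraph V} {m k : ℕ}

theorem isClique_Kstar (m k : ℕ) : (Kstar (m + 1) k).IsClique {Fin.last m}ᶜ := by
  intro a ha b hb hab
  exact ⟨hab, .inl (.inl ⟨Fin.lt_last_iff_ne_last.2 ha, Fin.lt_last_iff_ne_last.2 hb⟩)⟩

theorem Kstar_adj_last (hk : k ≤ m) {a : Fin (m + 1)} :
    (Kstar (m + 1) k).Adj (Fin.last m) a ↔ a.val < k := by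
  simp only [Kstar, SimpleGraph.fromRel_adj, ne_eq, Fin.ext_iff, Fin.val_last]
  omega

theorem degree_Kstar_last (hk : k ≤ m) [Fintype ((Kstar (m + 1) k).neighborSet (Fin.last m))] :
    (Kstar (m + 1) k).degree (Fin.last m) = k := by
  have hneighbor : (Kstar (m + 1) k).neighborFinset (Fin.last m) =
      ({a | a.val < k} : Finset (Fin (m + 1))) := by
    ext a
    simp [Kstar_adj_last hk]
  rw [← SimpleGraph.card_neighborFinset_eq_degree, hneighbor, Fin.card_filter_val_lt,
    min_eq_right (hk.trans m.le_succ)]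

theorem hosoya_Kstar (hk : k ≤ m) :
    hosoya (Kstar (m + 1) k) = telephone m + k * telephone (m - 1) := by
  classical
  have h := (hosoya_eq_telephone_add_degree_mul_iff (Fin.last m)).2 (isClique_Kstar m k)
  rwa [degree_Kstar_last hk, Fintype.card_fin] at h

theorem nonempty_iso_Kstar_iff [DecidableRel G.Adj] (hV : Fintype.card V = m + 1) (hk : k ≤ m) :
    Nonempty (G ≃g Kstar (m + 1) k) ↔ ∃ v, G.degree v = k ∧ G.IsClique {v}ᶜ := by
  classical
  constructor
  · rintro ⟨f⟩
    refine ⟨f.symm (Fin.last m), ?_, fun a ha b hb hab => f.map_adj_iff.1 ?_⟩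
    · rw [f.symm.degree_eq, degree_Kstar_last hk]
    · refine isClique_Kstar m k ?_ ?_ (f.injective.ne hab)
      · exact fun h => ha (f.toEquiv.eq_symm_apply.2 h)
      · exact fun h => hb (f.toEquiv.eq_symm_apply.2 h)
  · rintro ⟨v, hv, hclique⟩
    exact nonempty_iso_of_isClique_compl_singleton hclique (isClique_Kstar m k) (by simp [hV])
      (hv.trans (degree_Kstar_last hk).symm)

end Kstar

/-- If `G` is connected of order `n ≥ 2` with edge connectivity `k` (`1 ≤ k ≤ n − 1`),
then `Z(G) ≤ Z(K^k_{n-1,1})`, with equality iff `G ≅ K^k_{n-1,1}`. -/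
theorem stmt18 {V : Type*} [Fintype V] (G : SimpleGraph V) (n k : ℕ)
    (hn : Fintype.card V = n) (hn2 : 2 ≤ n) (hG : G.Connected)
    (hk : edgeConn G = k) (hk1 : 1 ≤ k) (hk2 : k ≤ n - 1) :
    hosoya G ≤ hosoya (Kstar n k) ∧
    (hosoya G = hosoya (Kstar n k) ↔ Nonempty (G ≃g Kstar n k)) := by
  classical
  have := hG.nonempty
  subst hk
  obtain ⟨m, rfl⟩ : ∃ m, n = m + 1 := Nat.exists_eq_add_of_le' (one_le_two.trans hn2)
  have hle := hosoya_le_telephone_add_edgeConn_mul hk1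
  have heq := hosoya_eq_telephone_add_edgeConn_mul_iff hk1
  rw [hn] at hle heq
  rw [hosoya_Kstar (m := m) hk2, nonempty_iso_Kstar_iff (m := m) hn hk2]
  exact ⟨hle, heq⟩
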